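/- arXiv:0708.3766 — 2 statements merged into one kernel-verified Lean document; each statement's English description precedes it below -/
import Mathlib

section
/- Let a ∈ S, x ∈ C_a, and let η : Γ → ℤ/2ℤ be a finitely supported configuration. Then ℓ((𝟘,a)(η,x)) − ℓ((η,x)) = 1 if η̄_a is not identically zero, and = −1 if η̄_a is identically zero. -/
open MeasureTheory ProbabilityTheory Filter Topology

namespace LamplighterTree

/-- `Γ`: the free product of `q` copies of `ℤ/2ℤ`. -/
abbrev Gamma (q : ℕ) : Type := Monoid.CoprodI (fun _ : Fin q => Multiplicative (ZMod 2))

/-- The generator `a_i` of `Γ`. -/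
def gen (q : ℕ) (i : Fin q) : Gamma q :=
  Monoid.CoprodI.of (i := i) (Multiplicative.ofAdd (1 : ZMod 2))

/-- Word length `|x|` of `x ∈ Γ` with respect to `S = {a_1, …, a_q}`, i.e. the graph
distance from `x` to the identity `o` in the homogeneous tree `T_q`. -/
noncomputable def wlen {q : ℕ} (x : Gamma q) : ℕ :=
  sInf {n | ∃ w : List (Fin q), w.length = n ∧ (w.map (gen q)).prod = x}

/-- `w` is a prefix of `w'`, i.e. `w` lies on the geodesic from `o` to `w'` in `T_q`. -/
def IsPrefix {q : ℕ} (w w' : Gamma q) : Prop :=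
  wlen w + wlen (w⁻¹ * w') = wlen w'

/-- The cone `C_w` rooted at `w`. -/
def cone {q : ℕ} (w : Gamma q) : Set (Gamma q) := {w' | IsPrefix w w'}

/-- Finitely supported lamp configurations `Γ → ℤ/2ℤ`. -/
abbrev Config (q : ℕ) : Type := Gamma q →₀ ZMod 2

/-- The lamplighter group `L_q` as the set of pairs (configuration, position). -/
abbrev L (q : ℕ) : Type := Config q × Gamma q

/-- The translated configuration `xη`, `(xη)(w) = η(x⁻¹ w)`. -/
noncomputable def translate {q : ℕ} (x : Gamma q) (η : Config q) : Config q :=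
  Finsupp.mapDomain (fun w => x * w) η

/-- The wreath-product multiplication `(η₁,x)(η₂,y) = (η₁ ⊕ xη₂, xy)`. -/
noncomputable def lmul {q : ℕ} (z₁ z₂ : L q) : L q :=
  (z₁.1 + translate z₁.2 z₂.1, z₁.2 * z₂.2)

/-- The identity `(𝟘, o)` of `L_q`. -/
def lone (q : ℕ) : L q := (0, 1)

/-- The generator `(𝟙_o, o)` of `L_q`. -/
noncomputable def lampSwitch (q : ℕ) : L q := (Finsupp.single 1 1, 1)

/-- The generator `(𝟘, a_i)` of `L_q`. -/
def move (q : ℕ) (i : Fin q) : L q := (0, gen q i)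

/-- The generating set `S_{L_q}`. -/
noncomputable def lampGen (q : ℕ) : Set (L q) := {lampSwitch q} ∪ {z | ∃ i, z = move q i}

/-- Word length `ℓ(z)` of `z ∈ L_q` with respect to `S_{L_q}`. -/
noncomputable def llen {q : ℕ} (z : L q) : ℕ :=
  sInf {n | ∃ w : List (L q), w.length = n ∧ (∀ g ∈ w, g ∈ lampGen q) ∧
    w.foldr lmul (lone q) = z}

instance {q : ℕ} : MeasurableSpace (Gamma q) := ⊤
instance {q : ℕ} : MeasurableSpace (Config q) := ⊤

/-- The lamplighter random walk `Z_n` built from the increments `i_k = inc k`, `k ≥ 1`. -/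
noncomputable def Z {q : ℕ} {Ω : Type*} (inc : ℕ → Ω → L q) : ℕ → Ω → L q
  | 0 => fun _ => lone q
  | n + 1 => fun ω => lmul (Z inc n ω) (inc (n + 1) ω)

end LamplighterTree

namespace LamplighterTree

/-! ### Normal forms in `Γ` -/

theorem gen_mul_self {q : ℕ} (i : Fin q) : gen q i * gen q i = 1 := by
  unfold gen
  rw [← map_mul]
  have : (Multiplicative.ofAdd (1 : ZMod 2)) * Multiplicative.ofAdd (1 : ZMod 2) = 1 := by decide
  rw [this, map_one]

theorem gen_inv {q : ℕ} (i : Fin q) : (gen q i)⁻¹ = gen q i :=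
  inv_eq_of_mul_eq_one_left (gen_mul_self i)

theorem gen_mul_gen_mul {q : ℕ} (i : Fin q) (y : Gamma q) : gen q i * (gen q i * y) = y := by
  rw [← mul_assoc, gen_mul_self, one_mul]

theorem mul_gen_mul_gen {q : ℕ} (i : Fin q) (y : Gamma q) : y * gen q i * gen q i = y := by
  rw [mul_assoc, gen_mul_self, mul_one]

/-- The reduced word of an element. -/
def nf {q : ℕ} (y : Gamma q) : Monoid.CoprodI.Word (fun _ : Fin q => Multiplicative (ZMod 2)) :=
  y • Monoid.CoprodI.Word.empty

/-- first letter -/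
def fst {q : ℕ} (y : Gamma q) : Option (Fin q) := (nf y).fstIdx

/-- length of the reduced word -/
def len {q : ℕ} (y : Gamma q) : ℕ := (nf y).toList.length

theorem one_ne : (Multiplicative.ofAdd (1 : ZMod 2)) ≠ 1 := by decide

theorem nf_gen_mul {q : ℕ} (k : Fin q) (y : Gamma q) (h : (nf y).fstIdx ≠ some k) :
    nf (gen q k * y) = Monoid.CoprodI.Word.cons (M := fun _ : Fin q => Multiplicative (ZMod 2))
      (i := k) (Multiplicative.ofAdd (1 : ZMod 2)) (nf y) h
      one_ne := by
  rw [Monoid.CoprodI.Word.cons_eq_smul]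
  unfold nf
  rw [mul_smul]
  rfl

theorem fst_one {q : ℕ} : fst (1 : Gamma q) = none := by
  unfold fst nf
  rw [one_smul]
  rfl

theorem len_one {q : ℕ} : len (1 : Gamma q) = 0 := by
  unfold len nf
  rw [one_smul]
  rfl

theorem fst_gen_mul {q : ℕ} (k : Fin q) (y : Gamma q) (h : fst y ≠ some k) :
    fst (gen q k * y) = some k := by
  unfold fst at h ⊢
  rw [nf_gen_mul k y h, Monoid.CoprodI.Word.fstIdx_cons]

theorem len_gen_mul {q : ℕ} (k : Fin q) (y : Gamma q) (h : fst y ≠ some k) :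
    len (gen q k * y) = len y + 1 := by
  unfold len
  rw [nf_gen_mul k y h]
  simp [Monoid.CoprodI.Word.cons]

theorem gamma_ind {q : ℕ} {P : Gamma q → Prop} (h1 : P 1)
    (h : ∀ k y, fst y ≠ some k → P y → P (gen q k * y)) (y : Gamma q) : P y := by
  have key : ∀ w : Monoid.CoprodI.Word (fun _ : Fin q => Multiplicative (ZMod 2)),
      P w.prod := by
    intro w
    induction w using Monoid.CoprodI.Word.consRecOn with
    | empty => simpa using h1
    | cons i m w hw hm ih =>
      rw [Monoid.CoprodI.Word.prod_cons]
      have hm' : m = Multiplicative.ofAdd (1 : ZMod 2) := by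
        revert m
        decide
      subst hm'
      refine h i w.prod ?_ ih
      have : nf w.prod = w := Monoid.CoprodI.Word.equiv.right_inv w
      unfold fst
      rwa [this]
  have := key (nf y)
  have h2 : (nf y).prod = y := Monoid.CoprodI.Word.equiv.left_inv y
  rwa [h2] at this

theorem fst_eq_some {q : ℕ} {k : Fin q} {y : Gamma q} (h : fst y = some k) :
    ∃ y', y = gen q k * y' ∧ fst y' ≠ some k := by
  revert h
  refine gamma_ind (P := fun y => fst y = some k → ∃ y', y = gen q k * y' ∧ fst y' ≠ some k)
    ?_ ?_ y
  · intro h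
    rw [fst_one] at h
    cases h
  · intro j y hy _ h
    rw [fst_gen_mul j y hy] at h
    cases h
    exact ⟨y, rfl, hy⟩

theorem len_gen_mul_le {q : ℕ} (k : Fin q) (y : Gamma q) : len (gen q k * y) ≤ len y + 1 := by
  by_cases h : fst y = some k
  · obtain ⟨y', rfl, hy'⟩ := fst_eq_some h
    rw [gen_mul_gen_mul, len_gen_mul k y' hy']
    omega
  · exact (len_gen_mul k y h).le

theorem len_list_le {q : ℕ} (w : List (Fin q)) : len (w.map (gen q)).prod ≤ w.length := by
  induction w with
  | nil => simp [len_one]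
  | cons k w ih =>
    rw [List.map_cons, List.prod_cons, List.length_cons]
    exact (len_gen_mul_le k _).trans (by omega)

theorem exists_list_len {q : ℕ} (y : Gamma q) :
    ∃ w : List (Fin q), w.length = len y ∧ (w.map (gen q)).prod = y := by
  refine gamma_ind (P := fun y => ∃ w : List (Fin q), w.length = len y ∧ (w.map (gen q)).prod = y)
    ⟨[], by simp [len_one], by simp⟩ ?_ y
  rintro k y hy ⟨w, h1, h2⟩
  exact ⟨k :: w, by simp [h1, len_gen_mul k y hy], by simp [h2]⟩

theorem wlen_eq_len {q : ℕ} (y : Gamma q) : wlen y = len y := by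
  unfold wlen
  apply le_antisymm
  · exact Nat.sInf_le (exists_list_len y)
  · refine le_csInf ⟨_, exists_list_len y⟩ ?_
    rintro n ⟨w, rfl, rfl⟩
    exact len_list_le w

theorem mem_cone_gen {q : ℕ} (i : Fin q) (y : Gamma q) :
    y ∈ cone (gen q i) ↔ fst y = some i := by
  have hi : len (gen q i) = 1 := by
    have := len_gen_mul i 1 (by rw [fst_one]; simp)
    rwa [mul_one, len_one] at this
  change wlen _ + wlen _ = wlen _ ↔ _
  rw [gen_inv, wlen_eq_len, wlen_eq_len, wlen_eq_len, hi]
  constructor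
  · intro h
    by_contra hc
    rw [len_gen_mul i y hc] at h
    omega
  · intro h
    obtain ⟨y', rfl, hy'⟩ := fst_eq_some h
    rw [gen_mul_gen_mul, len_gen_mul i y' hy']
    omega

theorem fst_gen {q : ℕ} (i : Fin q) : fst (gen q i) = some i := by
  have := fst_gen_mul i 1 (by rw [fst_one]; simp)
  rwa [mul_one] at this

theorem fst_mul_gen {q : ℕ} (j : Fin q) (y : Gamma q) :
    fst (y * gen q j) = fst y ∨ y = 1 ∨ y = gen q j := by
  refine gamma_ind (P := fun y => fst (y * gen q j) = fst y ∨ y = 1 ∨ y = gen q j) ?_ ?_ y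
  · simp
  · intro k y hy ih
    rw [mul_assoc, fst_gen_mul k y hy]
    rcases ih with ih | rfl | rfl
    · left
      exact fst_gen_mul k _ (by rwa [ih])
    · by_cases hk : j = k
      · subst hk
        simp
      · left
        rw [one_mul]
        apply fst_gen_mul
        rw [fst_gen]
        simpa using hk
    · left
      rw [gen_mul_self, mul_one, fst_gen]

theorem cone_exit {q : ℕ} {i j : Fin q} {y : Gamma q} (h : y ∈ cone (gen q i))
    (h' : y * gen q j ∉ cone (gen q i)) : y = gen q i ∧ y * gen q j = 1 := by
  rw [mem_cone_gen] at h h'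
  rcases fst_mul_gen j y with h1 | rfl | rfl
  · exact absurd (h1.trans h) h'
  · rw [fst_one] at h
    cases h
  · rw [fst_gen] at h
    cases h
    exact ⟨rfl, gen_mul_self i⟩

theorem one_not_mem {q : ℕ} (i : Fin q) : (1 : Gamma q) ∉ cone (gen q i) := by
  rw [mem_cone_gen, fst_one]
  simp

theorem gen_mem {q : ℕ} (i : Fin q) : gen q i ∈ cone (gen q i) := by
  rw [mem_cone_gen, fst_gen]

theorem cone_enter {q : ℕ} {i j : Fin q} {y : Gamma q} (h : y ∉ cone (gen q i))
    (h' : y * gen q j ∈ cone (gen q i)) : y = 1 ∧ y * gen q j = gen q i := by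
  have := cone_exit (j := j) h' (by rwa [mul_gen_mul_gen])
  rw [mul_gen_mul_gen] at this
  exact this.symm

/-! ### Lamplighter paths -/

/-- `Reach n y η e`: from position `y` one reaches `e` in `n` steps, toggling exactly `η`. -/
inductive Reach {q : ℕ} : ℕ → Gamma q → Config q → Gamma q → Prop
  | nil (y : Gamma q) : Reach 0 y 0 y
  | sw {n : ℕ} {y : Gamma q} {η : Config q} {e : Gamma q} :
      Reach n y η e → Reach (n + 1) y (Finsupp.single y 1 + η) e
  | mv {n : ℕ} {y : Gamma q} {η : Config q} {e : Gamma q} (j : Fin q) :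
      Reach n (y * gen q j) η e → Reach (n + 1) y η e

theorem Reach.append {q : ℕ} {n m : ℕ} {y z e : Gamma q} {η ξ : Config q} (h : Reach n y η z)
    (h' : Reach m z ξ e) : Reach (n + m) y (η + ξ) e := by
  induction h with
  | nil y => simpa using h'
  | sw _ ih =>
    rw [add_right_comm, add_assoc (Finsupp.single _ _)]
    exact (ih h').sw
  | mv j _ ih =>
    rw [add_right_comm]
    exact (ih h').mv j

theorem translate_add {q : ℕ} (g : Gamma q) (η ξ : Config q) :
    translate g (η + ξ) = translate g η + translate g ξ := Finsupp.mapDomain_add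

theorem translate_single {q : ℕ} (g y : Gamma q) (b : ZMod 2) :
    translate g (Finsupp.single y b) = Finsupp.single (g * y) b := Finsupp.mapDomain_single

theorem translate_zero {q : ℕ} (g : Gamma q) : translate g (0 : Config q) = 0 :=
  Finsupp.mapDomain_zero

theorem translate_translate {q : ℕ} (g h : Gamma q) (η : Config q) :
    translate g (translate h η) = translate (g * h) η := by
  unfold translate
  rw [← Finsupp.mapDomain_comp]
  congr 1
  funext w
  simp [mul_assoc]

theorem translate_one {q : ℕ} (η : Config q) : translate 1 η = η := by
  unfold translate
  simp only [one_mul]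
  exact Finsupp.mapDomain_id

theorem Reach.translate {q : ℕ} {n : ℕ} {y e : Gamma q} {η : Config q} (g : Gamma q)
    (h : Reach n y η e) : Reach n (g * y) (translate g η) (g * e) := by
  induction h with
  | nil y => rw [translate_zero]; exact Reach.nil _
  | sw _ ih =>
    rw [translate_add, translate_single]
    exact ih.sw
  | mv j _ ih =>
    rw [← mul_assoc] at ih
    exact ih.mv j

theorem reach_iff {q : ℕ} (n : ℕ) (z : L q) :
    (∃ w : List (L q), w.length = n ∧ (∀ g ∈ w, g ∈ lampGen q) ∧
      w.foldr lmul (lone q) = z) ↔ Reach n 1 z.1 z.2 := by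
  constructor
  · rintro ⟨w, rfl, hw, rfl⟩
    induction w with
    | nil => exact Reach.nil 1
    | cons g w ih =>
      have ih' := ih (fun g hg => hw g (List.mem_cons_of_mem _ hg))
      rcases hw g List.mem_cons_self with hg | ⟨j, hg⟩
      · have hg : g = lampSwitch q := hg
        subst hg
        simp only [List.foldr_cons, List.length_cons, lmul, lampSwitch, translate_one, one_mul]
        exact ih'.sw
      · subst hg
        simp only [List.foldr_cons, List.length_cons, lmul, move, zero_add]
        refine Reach.mv j ?_
        have := ih'.translate (gen q j)
        rw [mul_one] at this
        rwa [one_mul]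
  · have key : ∀ n y η e, Reach (q := q) n y η e →
        ∃ w : List (L q), w.length = n ∧ (∀ g ∈ w, g ∈ lampGen q) ∧
          lmul (0, y) (w.foldr lmul (lone q)) = (η, e) := by
      intro n y η e h
      induction h with
      | nil y => exact ⟨[], rfl, by simp, by simp [lmul, lone, translate_zero]⟩
      | @sw n y η e _ ih =>
        obtain ⟨w, h1, h2, h3⟩ := ih
        refine ⟨lampSwitch q :: w, by simp [h1], ?_, ?_⟩
        · intro g hg
          rcases List.mem_cons.1 hg with rfl | hg
          · exact Or.inl rfl
          · exact h2 g hg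
        · simp only [List.foldr_cons, lmul, lampSwitch, translate_one, one_mul, translate_add,
            translate_single, mul_one, zero_add, Prod.mk.injEq] at h3 ⊢
          rw [h3.1, h3.2]
          exact ⟨rfl, rfl⟩
      | @mv n y η e j _ ih =>
        obtain ⟨w, h1, h2, h3⟩ := ih
        refine ⟨move q j :: w, by simp [h1], ?_, ?_⟩
        · intro g hg
          rcases List.mem_cons.1 hg with rfl | hg
          · exact Or.inr ⟨j, rfl⟩
          · exact h2 g hg
        · simp only [List.foldr_cons, lmul, move, zero_add, translate_translate, 
            ← mul_assoc, Prod.mk.injEq] at h3 ⊢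
          exact h3
    intro h
    obtain ⟨w, h1, h2, h3⟩ := key n 1 z.1 z.2 h
    refine ⟨w, h1, h2, ?_⟩
    simpa [lmul, translate_one] using h3

theorem exists_path {q : ℕ} (g y : Gamma q) : ∃ n, Reach n y 0 (y * g) := by
  revert y
  refine gamma_ind (P := fun g => ∀ y, ∃ n, Reach n y 0 (y * g)) ?_ ?_ g
  · intro y
    exact ⟨0, by rw [mul_one]; exact Reach.nil y⟩
  · intro k g _ ih y
    obtain ⟨n, hn⟩ := ih (y * gen q k)
    rw [mul_assoc] at hn
    exact ⟨n + 1, hn.mv k⟩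

theorem exists_reach {q : ℕ} (η : Config q) : ∀ y e : Gamma q, ∃ n, Reach n y η e := by
  induction η using Finsupp.induction with
  | zero =>
    intro y e
    obtain ⟨n, hn⟩ := exists_path (y⁻¹ * e) y
    rw [mul_inv_cancel_left] at hn
    exact ⟨n, hn⟩
  | single_add p b η _ hb ih =>
    intro y e
    have hb1 : b = 1 := by
      revert b
      decide
    subst hb1
    obtain ⟨n, hn⟩ := exists_path (y⁻¹ * p) y
    rw [mul_inv_cancel_left] at hn
    obtain ⟨m, hm⟩ := ih p e
    have := hn.append hm.sw
    rw [zero_add] at this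
    exact ⟨_, this⟩

theorem llen_le {q : ℕ} {n : ℕ} {z : L q} (h : Reach n 1 z.1 z.2) : llen z ≤ n :=
  Nat.sInf_le ((reach_iff n z).2 h)

theorem reach_llen {q : ℕ} (z : L q) : Reach (llen z) 1 z.1 z.2 := by
  rw [← reach_iff]
  obtain ⟨n, hn⟩ := exists_reach z.1 1 z.2
  exact Nat.sInf_mem (s := {n | ∃ w : List (L q), w.length = n ∧ (∀ g ∈ w, g ∈ lampGen q) ∧
    w.foldr lmul (lone q) = z}) ⟨n, (reach_iff n z).2 hn⟩

open Classical in
/-- Split a path into the part inside the cone and the part outside it. -/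
theorem reach_split {q : ℕ} (i : Fin q) {n : ℕ} {y e : Gamma q} {η : Config q}
    (h : Reach n y η e) :
    ∃ u v : ℕ,
      Reach u (if y ∈ cone (gen q i) then y else gen q i) (η.filter (· ∈ cone (gen q i)))
        (if e ∈ cone (gen q i) then e else gen q i) ∧
      Reach v (if y ∈ cone (gen q i) then 1 else y) (η.filter (· ∉ cone (gen q i)))
        (if e ∈ cone (gen q i) then 1 else e) ∧
      u + v ≤ n ∧
      (y ∉ cone (gen q i) → e ∈ cone (gen q i) → u + v + 1 ≤ n) ∧
      (y ∈ cone (gen q i) → e ∈ cone (gen q i) → η.filter (· ∉ cone (gen q i)) ≠ 0 →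
        u + v + 2 ≤ n) := by
  induction h with
  | nil y =>
    refine ⟨0, 0, ?_, ?_, le_rfl, fun h h' => absurd h' h, ?_⟩
    · rw [Finsupp.filter_zero]; exact Reach.nil _
    · rw [Finsupp.filter_zero]; exact Reach.nil _
    · rw [Finsupp.filter_zero]
      intro _ _ h
      exact absurd rfl h
  | @sw n y η e _ ih =>
    obtain ⟨u, v, h1, h2, h3, h4, h5⟩ := ih
    rw [Finsupp.filter_add, Finsupp.filter_add]
    by_cases hy : y ∈ cone (gen q i)
    · rw [Finsupp.filter_single_of_pos _ hy,
        Finsupp.filter_single_of_neg (· ∉ cone (gen q i)) (not_not.2 hy), zero_add]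
      rw [if_pos hy] at h1 h2 ⊢
      rw [if_pos hy]
      exact ⟨u + 1, v, h1.sw, h2, by omega, fun h => absurd hy h,
        fun a b c => by have := h5 a b c; omega⟩
    · rw [Finsupp.filter_single_of_neg _ hy,
        Finsupp.filter_single_of_pos (· ∉ cone (gen q i)) hy, zero_add]
      rw [if_neg hy] at h1 h2 ⊢
      rw [if_neg hy]
      exact ⟨u, v + 1, h1, h2.sw, by omega, fun a b => by have := h4 a b; omega,
        fun h => absurd h hy⟩
  | @mv n y η e j _ ih =>
    obtain ⟨u, v, h1, h2, h3, h4, h5⟩ := ih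
    by_cases hy : y ∈ cone (gen q i) <;> by_cases hy' : y * gen q j ∈ cone (gen q i)
    · rw [if_pos hy'] at h1 h2
      rw [if_pos hy, if_pos hy]
      exact ⟨u + 1, v, h1.mv j, h2, by omega, fun h => absurd hy h,
        fun a b c => by have := h5 hy' b c; omega⟩
    · obtain ⟨e1, e2⟩ := cone_exit hy hy'
      rw [if_neg hy'] at h1 h2
      rw [if_pos hy, if_pos hy]
      rw [e2] at h2
      refine ⟨u, v, by rw [e1]; exact h1, h2, by omega, fun h => absurd hy h,
        fun a b c => by have := h4 hy' b; omega⟩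
    · obtain ⟨e1, e2⟩ := cone_enter hy hy'
      rw [if_pos hy'] at h1 h2
      rw [if_neg hy, if_neg hy]
      rw [e2] at h1
      refine ⟨u, v, h1, by rw [e1]; exact h2, by omega, fun a b => by omega,
        fun h => absurd h hy⟩
    · rw [if_neg hy'] at h1 h2
      rw [if_neg hy, if_neg hy]
      exact ⟨u, v + 1, h1, h2.mv j, by omega, fun a b => by have := h4 hy' b; omega,
        fun h => absurd h hy⟩

/-- for `a ∈ S`, `x ∈ C_a` and a finitely supported configuration `η`,
`ℓ((𝟘,a)(η,x)) − ℓ((η,x)) = 1` if `η̄_a ≢ 𝟘` and `= −1` if `η̄_a ≡ 𝟘`. -/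
theorem llen_diff_move_of_mem_cone {q : ℕ} (hq : 3 ≤ q) (i : Fin q)
    (η : Config q) (x : Gamma q) (hx : x ∈ cone (gen q i)) :
    ((∃ w ∉ cone (gen q i), η w ≠ 0) →
      (llen (lmul (move q i) (η, x)) : ℤ) - (llen ((η, x) : L q) : ℤ) = 1) ∧
    ((∀ w ∉ cone (gen q i), η w = 0) →
      (llen (lmul (move q i) (η, x)) : ℤ) - (llen ((η, x) : L q) : ℤ) = -1) := by
  classical
  set n0 := llen ((η, x) : L q) with hn0
  set n1 := llen (lmul (move q i) (η, x)) with hn1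
  have r0 : Reach n0 1 η x := reach_llen (η, x)
  have r1 : Reach n1 (gen q i) η x := by
    have := (reach_llen (lmul (move q i) (η, x))).translate (gen q i)
    rw [← hn1] at this
    clear_value n1
    simpa only [lmul, move, zero_add, translate_translate, gen_mul_self, translate_one, mul_one,
      gen_mul_gen_mul] using this
  have le0 : ∀ m, Reach m 1 η x → n0 ≤ m := fun m h => llen_le h
  have le1 : ∀ m, Reach m (gen q i) η x → n1 ≤ m := by
    intro m h
    refine llen_le ?_
    have := h.translate (gen q i)
    simpa only [lmul, move, zero_add, gen_mul_self] using this
  have t1 : n1 ≤ n0 + 1 := le1 _ (Reach.mv i (by rw [gen_mul_self]; exact r0))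
  have t0 : n0 ≤ n1 + 1 := le0 _ (Reach.mv i (by rw [one_mul]; exact r1))
  constructor
  · rintro ⟨w, hw, hηw⟩
    obtain ⟨u, v, h1, h2, -, -, h5⟩ := reach_split i r1
    rw [if_pos (gen_mem i), if_pos hx] at h1 h2
    have h6 := h5 (gen_mem i) hx (by
      intro h
      have := DFunLike.congr_fun h w
      rw [Finsupp.filter_apply_pos (fun w => w ∉ cone (gen q i)) η hw] at this
      exact hηw this)
    have h7 : Reach (u + 1) 1 _ x := Reach.mv i (by rw [one_mul]; exact h1)
    have h8 := h2.append h7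
    rw [add_comm (Finsupp.filter _ _), Finsupp.filter_add_filter_not] at h8
    have := le0 _ h8
    omega
  · intro h
    obtain ⟨u, v, h1, -, -, h4, -⟩ := reach_split i r0
    rw [if_neg (one_not_mem i), if_pos hx] at h1
    have h6 := h4 (one_not_mem i) hx
    have h7 : η.filter (· ∈ cone (gen q i)) = η := by
      rw [Finsupp.filter_eq_self_iff]
      intro w hw
      by_contra hc
      exact hw (h w hc)
    rw [h7] at h1
    have := le1 _ h1
    omega

end LamplighterTree
end

section
/- Let q ≥ 3 be an integer and p ∈ (0,1) a real number with p ≤ (q−2)/(q−1). Then ℓ_low,2 ≥ ℓ_low, where ℓ_low = ((1−p)(q−2)/q) · (q−2+2p(q+1))/(pq+q−2), ℓ_low,2 = ((1−p)(q−2)/q) · (1 + (2q/(q−1)) ν̂_3 + pq/(pq+q−2)), ν̂_3 = p(q−2+p) / (q(pq+q−2)(1−F̄)(1−(1−p)F̄)), and F̄ = (q − √(q² − 4(q−1)(1−p)²)) / (2(q−1)(1−p)). -/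
open MeasureTheory ProbabilityTheory Filter Topology

namespace LamplighterTree

/-- `F̄ = (q − √(q² − 4(q−1)(1−p)²)) / (2(q−1)(1−p))`. -/
noncomputable def Fbar (q : ℕ) (p : ℝ) : ℝ :=
  ((q : ℝ) - Real.sqrt ((q : ℝ) ^ 2 - 4 * ((q : ℝ) - 1) * (1 - p) ^ 2)) /
    (2 * ((q : ℝ) - 1) * (1 - p))

/-- `ν̂₃ = p(q−2+p)/(q(pq+q−2)(1−F̄)(1−(1−p)F̄))`. -/
noncomputable def nuhat3 (q : ℕ) (p : ℝ) : ℝ :=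
  p * ((q : ℝ) - 2 + p) /
    ((q : ℝ) * (p * q + q - 2) * (1 - Fbar q p) * (1 - (1 - p) * Fbar q p))

end LamplighterTree

namespace LamplighterTree

/-- for `q ≥ 3` and `p ∈ (0,1)` with `p ≤ (q−2)/(q−1)`,
`ℓ_low,2 ≥ ℓ_low`. -/
theorem second_lower_bound_dominates (q : ℕ) (hq : 3 ≤ q) (p : ℝ)
    (hp0 : 0 < p) (hp1 : p < 1) (hple : p ≤ ((q : ℝ) - 2) / ((q : ℝ) - 1)) :
    (1 - p) * ((q : ℝ) - 2) / q *
        (1 + (2 * (q : ℝ) / ((q : ℝ) - 1)) * nuhat3 q p + p * q / (p * q + q - 2)) ≥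
      (1 - p) * ((q : ℝ) - 2) / q *
        (((q : ℝ) - 2 + 2 * p * ((q : ℝ) + 1)) / (p * q + q - 2)) := by
  have hq3 : (3 : ℝ) ≤ (q : ℝ) := by exact_mod_cast hq
  have hs : (1 - p) * ((q : ℝ) - 1) ≥ 1 := by
    rw [le_div_iff₀ (by linarith)] at hple
    linarith
  have hs0 : 0 < 1 - p := by linarith
  have hD : 0 < p * q + q - 2 := by nlinarith
  have hden : 0 < 2 * ((q : ℝ) - 1) * (1 - p) := by nlinarith
  have hdisc : 0 ≤ (q : ℝ) ^ 2 - 4 * ((q : ℝ) - 1) * (1 - p) ^ 2 := by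
    have h1 : (1 - p) ^ 2 ≤ 1 := by nlinarith
    nlinarith [sq_nonneg ((q : ℝ) - 2)]
  have hF0 : 0 ≤ Fbar q p := by
    unfold Fbar
    apply div_nonneg _ hden.le
    rw [sub_nonneg]
    apply Real.sqrt_le_iff.mpr
    constructor
    · linarith
    · nlinarith [sq_nonneg (1 - p)]
  have hF1 : Fbar q p < 1 := by
    unfold Fbar
    rw [div_lt_one hden, sub_lt_comm]
    apply Real.lt_sqrt_of_sq_lt
    have : 0 < 2 * ((q : ℝ) - 1) * (1 - p) * (q * p) :=
      mul_pos hden (mul_pos (by linarith) hp0)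
    nlinarith
  have hquad : ((q : ℝ) - 1) * (1 - p) * Fbar q p ^ 2 - q * Fbar q p + (1 - p) = 0 := by
    have hsq := Real.sq_sqrt hdisc
    have hF : Fbar q p * (2 * ((q : ℝ) - 1) * (1 - p)) =
        (q : ℝ) - Real.sqrt ((q : ℝ) ^ 2 - 4 * ((q : ℝ) - 1) * (1 - p) ^ 2) := by
      unfold Fbar
      exact div_mul_cancel₀ _ hden.ne'
    have hr : Real.sqrt ((q : ℝ) ^ 2 - 4 * ((q : ℝ) - 1) * (1 - p) ^ 2) =
        (q : ℝ) - Fbar q p * (2 * ((q : ℝ) - 1) * (1 - p)) := by linarith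
    rw [hr] at hsq
    have h2 : (2 * (2 * ((q : ℝ) - 1) * (1 - p))) *
        (((q : ℝ) - 1) * (1 - p) * Fbar q p ^ 2 - q * Fbar q p + (1 - p)) = 0 := by
      linear_combination hsq
    rcases mul_eq_zero.mp h2 with h | h
    · linarith
    · exact h
  unfold nuhat3
  generalize Fbar q p = F at *
  have hA : 0 < 1 - F := by linarith
  have hB : 0 < 1 - (1 - p) * F := by nlinarith
  have hkey : ((q : ℝ) - 1) * ((1 - F) * (1 - (1 - p) * F)) ≤ (q : ℝ) - 2 + p := by
    nlinarith [mul_nonneg hF0 (sub_nonneg.mpr hs)]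
  have hq1 : 0 < (q : ℝ) - 1 := by linarith
  have hq0 : 0 < (q : ℝ) := by linarith
  have hmain : 2 * p / (p * q + q - 2) ≤ (2 * (q : ℝ) / ((q : ℝ) - 1)) *
      (p * ((q : ℝ) - 2 + p) /
        ((q : ℝ) * (p * q + q - 2) * (1 - F) * (1 - (1 - p) * F))) := by
    have h1 : (2 * (q : ℝ) / ((q : ℝ) - 1)) *
      (p * ((q : ℝ) - 2 + p) /
        ((q : ℝ) * (p * q + q - 2) * (1 - F) * (1 - (1 - p) * F))) =
        2 * p / (p * q + q - 2) *
          (((q : ℝ) - 2 + p) / (((q : ℝ) - 1) * ((1 - F) * (1 - (1 - p) * F)))) := by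
      rw [div_mul_div_comm, div_mul_div_comm, div_eq_div_iff (by positivity) (by positivity)]
      ring
    rw [h1]
    apply le_mul_of_one_le_right (by positivity)
    rw [one_le_div (by positivity)]
    exact hkey
  have hsplit : ((q : ℝ) - 2 + 2 * p * ((q : ℝ) + 1)) / (p * q + q - 2) =
      1 + 2 * p / (p * q + q - 2) + p * q / (p * q + q - 2) := by
    have hone : (p * q + q - 2) / (p * q + q - 2) = 1 := div_self hD.ne'
    rw [show (q : ℝ) - 2 + 2 * p * ((q : ℝ) + 1) = (p * q + q - 2) + 2 * p + p * q by ring,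
      add_div, add_div, hone]
  rw [hsplit]
  apply mul_le_mul_of_nonneg_left
  · linarith
  · apply div_nonneg _ hq0.le
    exact mul_nonneg hs0.le (by linarith)

end LamplighterTree
end
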